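/- Let v, w ∈ ℂ^m ⊗ ℂ^n be unit vectors with Schmidt coefficients α₁ ≥ α₂ ≥ … and β₁ ≥ β₂ ≥ … respectively, and fix 1 ≤ k ≤ min(m,n). Let r be the largest index with 1 ≤ r < k such that α_r > (Σ_{i=r+1}^{min(m,n)} α_i)/(k−r) (r = 0 if none exists) and set α̃ := (Σ_{i=r+1}^{min(m,n)} α_i)/(k−r); define s and β̃ analogously for the β_i. Then ‖|v⟩⟨w|‖_{γ,k} = sqrt( Σ_{i=1}^r α_i² + (k−r)α̃² ) · sqrt( Σ_{i=1}^s β_i² + (k−s)β̃² ). -/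

import Mathlib

open scoped Kronecker ComplexOrder
open Matrix

namespace Ent

variable {ι κ : Type*} [Fintype ι] [Fintype κ]

/-- Inner product ⟨v,w⟩ = Σᵢ conj(v i) * (w i) (conjugate-linear in the first argument). -/
noncomputable def vinner (v w : ι → ℂ) : ℂ := dotProduct (star v) w

/-- An elementary (product) tensor a ⊗ b in ℂ^ι ⊗ ℂ^κ. -/
def prodVec (a : ι → ℂ) (b : κ → ℂ) : ι × κ → ℂ := fun p => a p.1 * b p.2

/-- `v` has Schmidt rank at most `k`. -/
def SchmidtRankLE (k : ℕ) (v : ι × κ → ℂ) : Prop :=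
  ∃ (a : Fin k → ι → ℂ) (b : Fin k → κ → ℂ), v = ∑ i, prodVec (a i) (b i)

/-- The rank-one operator |v⟩⟨w|. -/
noncomputable def ketBra (v : ι → ℂ) (w : κ → ℂ) : Matrix ι κ ℂ :=
  Matrix.vecMulVec v (star w)

/-- A finite family of vectors is orthonormal. -/
def Orthonormal' {N : Type*} [DecidableEq N] (v : N → ι → ℂ) : Prop :=
  ∀ i j, vinner (v i) (v j) = if i = j then 1 else 0

/-- The S(k)-norm of `X ∈ M_ι ⊗ M_κ`. -/
noncomputable def SkNorm (k : ℕ) (X : Matrix (ι × κ) (ι × κ) ℂ) : ℝ :=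
  sSup { r | ∃ v w : ι × κ → ℂ, vinner v v = 1 ∧ vinner w w = 1 ∧
    SchmidtRankLE k v ∧ SchmidtRankLE k w ∧
    r = ‖vinner v (X.mulVec w)‖ }

/-- The product numerical radius r_k^⊗. -/
noncomputable def prodRad (k : ℕ) (Y : Matrix (ι × κ) (ι × κ) ℂ) : ℝ :=
  sSup { r | ∃ v : ι × κ → ℂ, vinner v v = 1 ∧ SchmidtRankLE k v ∧
    r = ‖vinner v (Y.mulVec v)‖ }

/-- The norm ‖·‖_{γ,k}. -/
noncomputable def gammaNorm (k : ℕ) (X : Matrix (ι × κ) (ι × κ) ℂ) : ℝ :=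
  sInf { r | ∃ (N : ℕ) (c : Fin N → ℂ) (v w : Fin N → (ι × κ → ℂ)),
    (∀ i, vinner (v i) (v i) = 1 ∧ vinner (w i) (w i) = 1 ∧
      SchmidtRankLE k (v i) ∧ SchmidtRankLE k (w i)) ∧
    X = ∑ i, c i • ketBra (v i) (w i) ∧
    r = ∑ i, ‖c i‖ }

/-- `ρ` is a density matrix. -/
def IsDensity (ρ : Matrix ι ι ℂ) : Prop := ρ.PosSemidef ∧ ρ.trace = 1

/-- `ρ` has Schmidt number at most `k`: it is a convex combination of projections onto
unit vectors of Schmidt rank at most `k`. -/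
def SchmidtNumLE (k : ℕ) (ρ : Matrix (ι × κ) (ι × κ) ℂ) : Prop :=
  ∃ (N : ℕ) (p : Fin N → ℝ) (v : Fin N → (ι × κ → ℂ)),
    (∀ i, 0 ≤ p i ∧ vinner (v i) (v i) = 1 ∧ SchmidtRankLE k (v i)) ∧
    (∑ i, p i) = 1 ∧ ρ = ∑ i, p i • ketBra (v i) (v i)

/-- The robustness norm R_k on Hermitian operators. -/
noncomputable def Rk (k : ℕ) (Y : Matrix (ι × κ) (ι × κ) ℂ) : ℝ :=
  sInf { r | ∃ (c₁ c₂ : ℝ) (ρ₁ ρ₂ : Matrix (ι × κ) (ι × κ) ℂ),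
    0 ≤ c₁ ∧ 0 ≤ c₂ ∧ IsDensity ρ₁ ∧ IsDensity ρ₂ ∧
    SchmidtNumLE k ρ₁ ∧ SchmidtNumLE k ρ₂ ∧
    Y = c₁ • ρ₁ - c₂ • ρ₂ ∧ r = c₁ + c₂ }

/-- `Y` is k-block positive: ⟨v|Y|v⟩ ≥ 0 for every unit vector of Schmidt rank at most `k`. -/
def KBlockPos (k : ℕ) (Y : Matrix (ι × κ) (ι × κ) ℂ) : Prop :=
  ∀ v : ι × κ → ℂ, vinner v v = 1 → SchmidtRankLE k v →
    0 ≤ (vinner v (Y.mulVec v)).re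

/-- Dual of a norm on matrices, w.r.t. the Hilbert–Schmidt inner product ⟨W,X⟩ = Tr(Wᴴ X). -/
noncomputable def dualNormM (f : Matrix ι κ ℂ → ℝ) (X : Matrix ι κ ℂ) : ℝ :=
  sSup { r | ∃ W : Matrix ι κ ℂ, f W ≤ 1 ∧ r = ‖(Wᴴ * X).trace‖ }

/-- Dual of a norm, computed in the real Hilbert space of Hermitian matrices with the
Hilbert–Schmidt inner product ⟨W,Y⟩ = Tr(WY). -/
noncomputable def dualNormHerm (f : Matrix ι ι ℂ → ℝ) (Y : Matrix ι ι ℂ) : ℝ :=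
  sSup { r | ∃ W : Matrix ι ι ℂ, W.IsHermitian ∧ f W ≤ 1 ∧ r = |((W * Y).trace).re| }

/-- The Frobenius norm of a matrix. -/
noncomputable def frobNorm (X : Matrix ι κ ℂ) : ℝ :=
  Real.sqrt (∑ i, ∑ j, Complex.normSq (X i j))

/-- The (k,2)-norm: ‖X‖_{(k,2)} = sup { |Tr(XY)| : rank Y ≤ k, ‖Y‖_F ≤ 1 }. -/
noncomputable def kNorm (k : ℕ) (X : Matrix ι κ ℂ) : ℝ :=
  sSup { r | ∃ Y : Matrix κ ι ℂ, Y.rank ≤ k ∧ frobNorm Y ≤ 1 ∧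
    r = ‖(X * Y).trace‖ }

/-- The trace norm: the sum of the singular values, i.e. of the square roots of the
eigenvalues of Xᴴ X. -/
noncomputable def traceNorm [DecidableEq κ] (X : Matrix ι κ ℂ) : ℝ :=
  ∑ i, Real.sqrt ((Matrix.isHermitian_conjTranspose_mul_self X).eigenvalues i)

/-- The s(k) vector norm: sup of |⟨u,w⟩| over unit vectors u of Schmidt rank at most k. -/
noncomputable def skVecNorm (k : ℕ) (w : ι × κ → ℂ) : ℝ :=
  sSup { r | ∃ u : ι × κ → ℂ, vinner u u = 1 ∧ SchmidtRankLE k u ∧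
    r = ‖vinner u w‖ }

/-- Dual of a norm on vectors. -/
noncomputable def dualNormV (f : (ι × κ → ℂ) → ℝ) (v : ι × κ → ℂ) : ℝ :=
  sSup { r | ∃ w : ι × κ → ℂ, f w ≤ 1 ∧ r = ‖vinner w v‖ }

/-- The realignment map, L(X)_{(i,k),(j,l)} = X_{(i,j),(k,l)}. -/
def realign {m n : ℕ} (X : Matrix (Fin m × Fin n) (Fin m × Fin n) ℂ) :
    Matrix (Fin m × Fin m) (Fin n × Fin n) ℂ :=
  fun p q => X (p.1, q.1) (p.2, q.2)

/-- The projective tensor norm on M_{m,n} ⊗ M_{m,n}. -/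
noncomputable def projNorm {m n : ℕ} (Z : Matrix (Fin m × Fin m) (Fin n × Fin n) ℂ) : ℝ :=
  sInf { r | ∃ (N : ℕ) (A B : Fin N → Matrix (Fin m) (Fin n) ℂ),
    Z = ∑ i, A i ⊗ₖ B i ∧ r = ∑ i, traceNorm (A i) * traceNorm (B i) }


/-!
The norm `‖·‖_{γ,k}` is dual to overlaps with vectors of Schmidt rank at most `k`. Flatten the
coefficients of `v` to `η = (α₁, …, α_r, α̃, …, α̃)`, so that `F² := Σ_{i ≤ k} η_i²` is the quantity
under the first square root.

* Upper bound: `α = η · t` with `t ∈ [0, 1]^q` and `Σ t = k`. Such a `t` is a convex combination of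
  indicators of `k`-element sets (a consequence of Birkhoff's theorem), which makes `v` a convex
  combination of vectors of Schmidt rank at most `k` and norm at most `F`.
* Lower bound: the vector `x` with coefficients `η` satisfies `⟨x, v⟩ = F²`, while its overlap with
  a unit vector `u` of Schmidt rank at most `k` is at most `F`. For the latter, project the left
  tensor factor onto the at most `k`-dimensional support of `u`: this turns `‖x‖²` into
  `Σ η_i² p_i` with `0 ≤ p_i ≤ 1` and `Σ p_i ≤ k`.
-/

open Finset
open WithLp (toLp)

section Threshold

variable {I : Type*}

/-- `J` consists of indices carrying the largest values of `f`, the two groups of values being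
separated by a nonnegative level. -/
def IsTopSet (f : I → ℝ) (J : Finset I) : Prop :=
  ∃ c, 0 ≤ c ∧ (∀ i ∈ J, c ≤ f i) ∧ ∀ i ∉ J, f i ≤ c

variable [Fintype I]

lemma card_mul_div_card_of_sum_eq {f : I → ℝ} (hf : ∀ i, 0 ≤ f i) {J : Finset I}
    (hsum : ∑ i, f i = #J) (i : I) : #J * (f i / #J) = f i := by
  rcases eq_or_ne (#J : ℝ) 0 with hJ | hJ
  · rw [hJ] at hsum
    rw [hJ, zero_mul, (sum_eq_zero_iff_of_nonneg fun i _ => hf i).1 hsum i (mem_univ i)]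
  · exact mul_div_cancel₀ _ hJ

lemma IsTopSet.sum_mul_le {f p : I → ℝ} {J : Finset I} (hJ : IsTopSet f J)
    (hp0 : ∀ i, 0 ≤ p i) (hp1 : ∀ i, p i ≤ 1) (hp : ∑ i, p i ≤ #J) :
    ∑ i, f i * p i ≤ ∑ i ∈ J, f i := by
  classical
  obtain ⟨c, hc, hcJ, hJc⟩ := hJ
  have hterm (i : I) : f i * p i ≤ c * p i + if i ∈ J then f i - c else 0 := by
    split_ifs with hi
    · nlinarith [hcJ i hi, hp1 i]
    · nlinarith [hJc i hi, hp0 i]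
  calc ∑ i, f i * p i
      ≤ ∑ i, (c * p i + if i ∈ J then f i - c else 0) := sum_le_sum fun i _ => hterm i
    _ = c * ∑ i, p i + (∑ i ∈ J, f i - #J * c) := by
      simp [sum_add_distrib, mul_sum, sum_ite_mem, sum_sub_distrib]
    _ ≤ ∑ i ∈ J, f i := by nlinarith

lemma exists_doublyStochastic_mulVec_indicator [DecidableEq I] {t : I → ℝ}
    (h0 : ∀ i, 0 ≤ t i) (h1 : ∀ i, t i ≤ 1) {J : Finset I} (hJ : ∑ i, t i = #J) :
    ∃ M ∈ doublyStochastic ℝ I, M *ᵥ (J : Set I).indicator 1 = t := by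
  have hJc : ∑ i, (1 - t i) = #Jᶜ := by
    rw [sum_sub_distrib, hJ, card_compl, Nat.cast_sub (card_le_univ J)]
    simp
  have h0c (i : I) : 0 ≤ 1 - t i := sub_nonneg.2 (h1 i)
  let M : Matrix I I ℝ := .of fun i j => if j ∈ J then t i / #J else (1 - t i) / #Jᶜ
  have hrow_J (i : I) : ∑ j ∈ J, M i j = t i := by
    rw [← card_mul_div_card_of_sum_eq h0 hJ i, ← nsmul_eq_mul, ← sum_const]
    exact sum_congr rfl fun j hj => if_pos hj
  have hrow_Jc (i : I) : ∑ j ∈ Jᶜ, M i j = 1 - t i := by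
    rw [← card_mul_div_card_of_sum_eq h0c hJc i, ← nsmul_eq_mul, ← sum_const]
    exact sum_congr rfl fun j hj => if_neg (mem_compl.1 hj)
  refine ⟨M, mem_doublyStochastic_iff_sum.2 ⟨fun i j => ?_, fun i => ?_, fun j => ?_⟩, ?_⟩
  · have := h0 i
    have := h0c i
    simp only [M, of_apply]
    split_ifs <;> positivity
  · rw [← sum_add_sum_compl J, hrow_J, hrow_Jc, add_sub_cancel]
  · by_cases hj : j ∈ J
    · simp only [M, of_apply, if_pos hj, ← sum_div, hJ]
      exact div_self (Nat.cast_ne_zero.2 (card_ne_zero_of_mem hj))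
    · simp only [M, of_apply, if_neg hj, ← sum_div, hJc]
      exact div_self (Nat.cast_ne_zero.2 (card_ne_zero_of_mem (mem_compl.2 hj)))
  · funext i
    simp [mulVec, dotProduct, Set.indicator_apply, hrow_J]

lemma mem_convexHull_indicator {t : I → ℝ} (h0 : ∀ i, 0 ≤ t i) (h1 : ∀ i, t i ≤ 1)
    {J : Finset I} (hJ : ∑ i, t i = #J) :
    t ∈ convexHull ℝ {f | ∃ S : Finset I, #S = #J ∧ (S : Set I).indicator 1 = f} := by
  classical
  obtain ⟨M, hM, rfl⟩ := exists_doublyStochastic_mulVec_indicator h0 h1 hJ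
  rw [← SetLike.mem_coe, doublyStochastic_eq_convexHull_permMatrix] at hM
  have hMt := Set.mem_image_of_mem (mulVecBilin ℝ ℝ |>.flip ((J : Set I).indicator 1)) hM
  rw [LinearMap.image_convexHull] at hMt
  refine convexHull_mono ?_ hMt
  rintro _ ⟨_, ⟨σ, rfl⟩, rfl⟩
  refine ⟨J.map σ.symm.toEmbedding, card_map _, ?_⟩
  funext i
  simp only [LinearMap.flip_apply, mulVecBilin_apply, permMatrix_mulVec, Function.comp_apply,
    Set.indicator_apply, mem_coe, mem_map_equiv, Equiv.symm_symm]
  rfl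

end Threshold

lemma sum_norm_starProjection_sq_le_finrank {𝕜 E I : Type*} [RCLike 𝕜] [NormedAddCommGroup E]
    [InnerProductSpace 𝕜 E] [Fintype I] {a : I → E} (ha : Orthonormal 𝕜 a) (V : Submodule 𝕜 E)
    [FiniteDimensional 𝕜 V] :
    ∑ i, ‖V.starProjection (a i)‖ ^ 2 ≤ Module.finrank 𝕜 V := by
  let e := stdOrthonormalBasis 𝕜 V
  have hexpand (i : I) : ‖V.starProjection (a i)‖ ^ 2 = ∑ l, ‖inner 𝕜 (a i) (e l : E)‖ ^ 2 := by
    rw [V.starProjection_apply, ← Submodule.coe_norm, ← e.sum_sq_norm_inner_left]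
    simp
  calc ∑ i, ‖V.starProjection (a i)‖ ^ 2
      = ∑ l, ∑ i, ‖inner 𝕜 (a i) (e l : E)‖ ^ 2 := by
        rw [sum_comm]
        exact sum_congr rfl fun i _ => hexpand i
    _ ≤ ∑ l, ‖(e l : E)‖ ^ 2 := sum_le_sum fun l _ => ha.sum_inner_products_le _
    _ = Module.finrank 𝕜 V := by simp [← Submodule.coe_norm]

section InnerProduct

lemma vinner_eq_inner (v w : ι → ℂ) : vinner v w = inner ℂ (toLp 2 v) (toLp 2 w) := by
  rw [vinner, EuclideanSpace.inner_toLp_toLp, dotProduct_comm]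

lemma norm_vinner_le (v w : ι → ℂ) : ‖vinner v w‖ ≤ ‖toLp 2 v‖ * ‖toLp 2 w‖ := by
  rw [vinner_eq_inner]
  exact norm_inner_le_norm _ _

lemma vinner_self_eq_norm_sq (v : ι → ℂ) : vinner v v = (‖toLp 2 v‖ ^ 2 : ℝ) := by
  rw [vinner_eq_inner, inner_self_eq_norm_sq_to_K, Complex.ofReal_pow]
  rfl

lemma vinner_self_eq_one_iff {v : ι → ℂ} : vinner v v = 1 ↔ ‖toLp 2 v‖ = 1 := by
  rw [vinner_self_eq_norm_sq, Complex.ofReal_eq_one, pow_eq_one_iff_of_nonneg (norm_nonneg _)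
    two_ne_zero]

lemma star_vinner (v w : ι → ℂ) : star (vinner v w) = vinner w v := by
  rw [vinner, vinner, star_dotProduct, star_star]

lemma norm_vinner_comm (v w : ι → ℂ) : ‖vinner v w‖ = ‖vinner w v‖ := by
  rw [← star_vinner, norm_star]

lemma vinner_sum_left {I : Type*} (s : Finset I) (f : I → ι → ℂ) (w : ι → ℂ) :
    vinner (∑ i ∈ s, f i) w = ∑ i ∈ s, vinner (f i) w := by
  simp [vinner, sum_dotProduct]

lemma vinner_sum_right {I : Type*} (s : Finset I) (w : ι → ℂ) (f : I → ι → ℂ) :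
    vinner w (∑ i ∈ s, f i) = ∑ i ∈ s, vinner w (f i) := by
  simp [vinner, dotProduct_sum]

lemma vinner_prodVec (a c : ι → ℂ) (b d : κ → ℂ) :
    vinner (prodVec a b) (prodVec c d) = vinner a c * vinner b d := by
  simp only [vinner, dotProduct, prodVec, Fintype.sum_prod_type, Pi.star_apply, star_mul',
    sum_mul_sum, mul_mul_mul_comm]

lemma vinner_mulVec_ketBra (x v : ι → ℂ) (w y : κ → ℂ) :
    vinner x (ketBra v w *ᵥ y) = vinner x v * vinner w y := by
  simp [vinner, ketBra, vecMulVec_mulVec, mul_comm]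

lemma ketBra_sum_sum {X Y I I' : Type*} [Fintype I] [Fintype I'] (x : I → X → ℂ)
    (y : I' → Y → ℂ) :
    ketBra (∑ i, x i) (∑ j, y j) = ∑ p : I × I', ketBra (x p.1) (y p.2) := by
  ext
  simp [ketBra, vecMulVec_apply, Matrix.sum_apply, Fintype.sum_prod_type, sum_mul_sum]

lemma ketBra_smul_smul {X Y : Type*} (c d : ℂ) (v : X → ℂ) (w : Y → ℂ) :
    ketBra (c • v) (d • w) = (c * star d) • ketBra v w := by
  simp [ketBra, star_smul, smul_vecMulVec, vecMulVec_smul, smul_smul, mul_comm]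

lemma Orthonormal'.orthonormal {I : Type*} [DecidableEq I] {a : I → ι → ℂ}
    (ha : Orthonormal' a) : Orthonormal ℂ fun i => toLp 2 (a i) :=
  orthonormal_iff_ite.2 fun i j => (vinner_eq_inner _ _).symm.trans (ha i j)

end InnerProduct

section SchmidtRank

variable {X Y : Type*} {k : ℕ}

lemma schmidtRankLE_sum {I : Type*} [Fintype I] (hI : Fintype.card I ≤ k) (a : I → X → ℂ)
    (b : I → Y → ℂ) : SchmidtRankLE k (∑ i, prodVec (a i) (b i)) := by
  obtain ⟨e⟩ : Nonempty (I ↪ Fin k) := Function.Embedding.nonempty_of_card_le (by simpa)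
  refine ⟨Function.extend e a 0, Function.extend e b 0,
    Fintype.sum_of_injective e e.injective _ _ (fun l hl => ?_) fun i => ?_⟩
  · funext p
    simp [prodVec, Function.extend_apply' _ _ _ hl]
  · simp [e.injective.extend_apply]

lemma schmidtRankLE_single [DecidableEq X] [DecidableEq Y] (hk : 0 < k) (p : X × Y) :
    SchmidtRankLE k (Pi.single p 1) := by
  have hprod : prodVec (Pi.single p.1 1) (Pi.single p.2 1) = Pi.single p (1 : ℂ) := by
    funext ⟨i, j⟩
    simp [prodVec, Pi.single_apply, Prod.ext_iff, ← ite_and, and_comm]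
  simpa [hprod] using schmidtRankLE_sum (I := Unit) (by simpa [Nat.succ_le_iff] using hk)
    (fun _ => Pi.single p.1 1) fun _ => Pi.single p.2 1

lemma SchmidtRankLE.smul {v : X × Y → ℂ} (hv : SchmidtRankLE k v) (c : ℂ) :
    SchmidtRankLE k (c • v) := by
  obtain ⟨a, b, rfl⟩ := hv
  refine ⟨fun i => c • a i, b, ?_⟩
  rw [smul_sum]
  refine sum_congr rfl fun i _ => ?_
  funext p
  simp [prodVec, mul_assoc]

variable {I : Type*} [Fintype I]

/-- The vector `∑ i, η i • (a i ⊗ b i)` as a function of its coefficients `η`; a Schmidt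
decomposition presents a vector in this form with `a` and `b` orthonormal. -/
noncomputable def schmidtMap (a : I → X → ℂ) (b : I → Y → ℂ) : (I → ℝ) →ₗ[ℝ] (X × Y → ℂ) :=
  Fintype.linearCombination ℝ fun i => prodVec (a i) (b i)

lemma schmidtMap_apply (a : I → X → ℂ) (b : I → Y → ℂ) (η : I → ℝ) :
    schmidtMap a b η = ∑ i, η i • prodVec (a i) (b i) :=
  rfl

lemma schmidtRankLE_schmidtMap_mul_indicator (a : I → X → ℂ) (b : I → Y → ℂ) (η : I → ℝ)
    (S : Finset I) : SchmidtRankLE #S (schmidtMap a b (η * (S : Set I).indicator 1)) := by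
  have hsum : schmidtMap a b (η * (S : Set I).indicator 1) =
      ∑ i : S, prodVec (η i • a i) (b i) := by
    classical
    rw [schmidtMap_apply, sum_coe_sort S fun i => prodVec (η i • a i) (b i), ← sum_subset
      (subset_univ S) fun i _ hi => by simp [hi]]
    refine sum_congr rfl fun i hi => ?_
    funext p
    simp [hi, prodVec, mul_assoc]
  rw [hsum]
  exact schmidtRankLE_sum (by simp) _ _

variable [DecidableEq I]

lemma vinner_schmidtMap (x y : I → ι → ℂ) {b : I → κ → ℂ} (hb : Orthonormal' b) (η θ : I → ℝ) :
    vinner (schmidtMap x b η) (schmidtMap y b θ) =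
      ∑ i, ((η i * θ i : ℝ) : ℂ) * vinner (x i) (y i) := by
  have hterm (i j : I) : vinner (η i • prodVec (x i) (b i)) (θ j • prodVec (y j) (b j)) =
      ((η i * θ j : ℝ) : ℂ) * (vinner (x i) (y j) * if i = j then 1 else 0) := by
    rw [← hb i j, ← vinner_prodVec]
    simp [vinner, star_smul, mul_assoc, mul_left_comm]
  simp [schmidtMap_apply, vinner_sum_left, vinner_sum_right, hterm]

lemma vinner_schmidtMap_of_orthonormal {a : I → ι → ℂ} {b : I → κ → ℂ} (ha : Orthonormal' a)
    (hb : Orthonormal' b) (η θ : I → ℝ) :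
    vinner (schmidtMap a b η) (schmidtMap a b θ) = (∑ i, η i * θ i : ℝ) := by
  simp [vinner_schmidtMap a a hb, ha _ _]

lemma norm_schmidtMap_sq (x : I → ι → ℂ) {b : I → κ → ℂ} (hb : Orthonormal' b) (η : I → ℝ) :
    ‖toLp 2 (schmidtMap x b η)‖ ^ 2 = ∑ i, η i ^ 2 * ‖toLp 2 (x i)‖ ^ 2 := by
  apply Complex.ofReal_injective
  rw [← vinner_self_eq_norm_sq, vinner_schmidtMap x x hb]
  simp [vinner_self_eq_norm_sq, sq]

lemma SchmidtRankLE.exists_leftSupport {u : ι × κ → ℂ} (hu : SchmidtRankLE k u) :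
    ∃ V : Submodule ℂ (EuclideanSpace ℂ ι), Module.finrank ℂ V ≤ k ∧
      ∀ (x : ι → ℂ) (y : κ → ℂ),
        vinner (prodVec (V.starProjection (toLp 2 x)).ofLp y) u = vinner (prodVec x y) u := by
  obtain ⟨f, g, rfl⟩ := hu
  let V := Submodule.span ℂ (Set.range fun l => toLp 2 (f l))
  refine ⟨V, (finrank_range_le_card (R := ℂ) fun l => toLp 2 (f l)).trans_eq (Fintype.card_fin k),
    fun x y => ?_⟩
  have hproj (l : Fin k) :
      vinner (V.starProjection (toLp 2 x)).ofLp (f l) = vinner x (f l) := by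
    have hl : V.starProjection (toLp 2 (f l)) = toLp 2 (f l) :=
      Submodule.starProjection_eq_self_iff.2 (Submodule.subset_span ⟨l, rfl⟩)
    rw [vinner_eq_inner, vinner_eq_inner, WithLp.toLp_ofLp,
      Submodule.inner_starProjection_left_eq_right, hl]
  simp only [vinner_sum_right, vinner_prodVec, hproj]

lemma norm_vinner_schmidtMap_le {a : I → ι → ℂ} {b : I → κ → ℂ} (ha : Orthonormal' a)
    (hb : Orthonormal' b) {η : I → ℝ} {J : Finset I} (hJ : IsTopSet (fun i => η i ^ 2) J)
    {u : ι × κ → ℂ} (hu : SchmidtRankLE #J u) :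
    ‖vinner (schmidtMap a b η) u‖ ≤ √(∑ i ∈ J, η i ^ 2) * ‖toLp 2 u‖ := by
  obtain ⟨V, hV, hVu⟩ := hu.exists_leftSupport
  let Pa : I → ι → ℂ := fun i => (V.starProjection (toLp 2 (a i))).ofLp
  have hproj : vinner (schmidtMap Pa b η) u = vinner (schmidtMap a b η) u := by
    simp only [schmidtMap_apply, vinner_sum_left]
    refine sum_congr rfl fun i _ => ?_
    have := hVu (a i) (b i)
    simp only [vinner, star_smul, star_trivial, smul_dotProduct] at this ⊢
    rw [this]
  have hweight_le_one (i : I) : ‖toLp 2 (Pa i)‖ ^ 2 ≤ 1 :=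
    pow_le_one₀ (norm_nonneg _)
      ((V.norm_starProjection_apply_le _).trans_eq (ha.orthonormal.norm_eq_one i))
  have hweight_sum : ∑ i, ‖toLp 2 (Pa i)‖ ^ 2 ≤ #J :=
    (sum_norm_starProjection_sq_le_finrank ha.orthonormal V).trans (Nat.cast_le.2 hV)
  have hnorm : ‖toLp 2 (schmidtMap Pa b η)‖ ≤ √(∑ i ∈ J, η i ^ 2) := by
    refine Real.le_sqrt_of_sq_le ?_
    rw [norm_schmidtMap_sq Pa hb]
    exact hJ.sum_mul_le (fun _ => sq_nonneg _) hweight_le_one hweight_sum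
  calc ‖vinner (schmidtMap a b η) u‖ = ‖vinner (schmidtMap Pa b η) u‖ := by rw [hproj]
    _ ≤ ‖toLp 2 (schmidtMap Pa b η)‖ * ‖toLp 2 u‖ := norm_vinner_le _ _
    _ ≤ √(∑ i ∈ J, η i ^ 2) * ‖toLp 2 u‖ := by gcongr

lemma skVecNorm_nonneg (k : ℕ) (x : ι × κ → ℂ) : 0 ≤ skVecNorm k x := by
  refine Real.sSup_nonneg ?_
  rintro _ ⟨u, -, -, rfl⟩
  exact norm_nonneg _

lemma norm_vinner_le_skVecNorm {u : ι × κ → ℂ} (hu1 : vinner u u = 1) (hu : SchmidtRankLE k u)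
    (x : ι × κ → ℂ) : ‖vinner u x‖ ≤ skVecNorm k x := by
  refine le_csSup ⟨‖toLp 2 x‖, ?_⟩ ⟨u, hu1, hu, rfl⟩
  rintro _ ⟨z, hz, -, rfl⟩
  simpa [vinner_self_eq_one_iff.1 hz] using norm_vinner_le z x

lemma skVecNorm_schmidtMap_le {a : I → ι → ℂ} {b : I → κ → ℂ} (ha : Orthonormal' a)
    (hb : Orthonormal' b) {η : I → ℝ} {J : Finset I} (hJ : IsTopSet (fun i => η i ^ 2) J) :
    skVecNorm #J (schmidtMap a b η) ≤ √(∑ i ∈ J, η i ^ 2) := by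
  refine Real.sSup_le ?_ (Real.sqrt_nonneg _)
  rintro _ ⟨u, hu1, hu, rfl⟩
  rw [norm_vinner_comm]
  simpa [vinner_self_eq_one_iff.1 hu1] using norm_vinner_schmidtMap_le ha hb hJ hu

/-- The vectors of Schmidt rank at most `k` and norm at most `F`; its convex hull is the ball of
radius `F` of the atomic norm generated by unit vectors of Schmidt rank at most `k`. -/
def schmidtBall (ι κ : Type*) [Fintype ι] [Fintype κ] (k : ℕ) (F : ℝ) : Set (ι × κ → ℂ) :=
  {u | SchmidtRankLE k u ∧ ‖toLp 2 u‖ ≤ F}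

lemma schmidtMap_mul_mem_convexHull {a : I → ι → ℂ} {b : I → κ → ℂ} (ha : Orthonormal' a)
    (hb : Orthonormal' b) {η t : I → ℝ} {J : Finset I} (hJ : IsTopSet (fun i => η i ^ 2) J)
    (h0 : ∀ i, 0 ≤ t i) (h1 : ∀ i, t i ≤ 1) (ht : ∑ i, t i = #J) :
    schmidtMap a b (η * t) ∈ convexHull ℝ (schmidtBall ι κ #J √(∑ i ∈ J, η i ^ 2)) := by
  have hmem := Set.mem_image_of_mem (schmidtMap a b ∘ₗ LinearMap.mulLeft ℝ η)
    (mem_convexHull_indicator h0 h1 ht)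
  rw [LinearMap.image_convexHull] at hmem
  refine convexHull_mono ?_ hmem
  rintro _ ⟨_, ⟨S, hS, rfl⟩, rfl⟩
  refine ⟨hS ▸ schmidtRankLE_schmidtMap_mul_indicator a b η S, Real.le_sqrt_of_sq_le ?_⟩
  have hindicator : ∑ i, (S : Set I).indicator (1 : I → ℝ) i ≤ #J := by
    simp [Set.indicator_apply, hS]
  calc ‖toLp 2 (schmidtMap a b (η * (S : Set I).indicator 1))‖ ^ 2
      = ∑ i, η i ^ 2 * (S : Set I).indicator 1 i := by
        simp [norm_schmidtMap_sq a hb, ha.orthonormal.norm_eq_one, Set.indicator_apply]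
    _ ≤ ∑ i ∈ J, η i ^ 2 :=
        hJ.sum_mul_le (Set.indicator_nonneg fun _ _ => zero_le_one)
          (Set.indicator_le' (fun _ _ => le_rfl) fun _ _ => zero_le_one) hindicator

end SchmidtRank

section GammaNorm

variable {k : ℕ}

/-- The costs `∑ |c_i|` of the decompositions over which `gammaNorm` takes its infimum. -/
def gammaCosts (k : ℕ) (X : Matrix (ι × κ) (ι × κ) ℂ) : Set ℝ :=
  { r | ∃ (N : ℕ) (c : Fin N → ℂ) (v w : Fin N → (ι × κ → ℂ)),
    (∀ i, vinner (v i) (v i) = 1 ∧ vinner (w i) (w i) = 1 ∧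
      SchmidtRankLE k (v i) ∧ SchmidtRankLE k (w i)) ∧
    X = ∑ i, c i • ketBra (v i) (w i) ∧
    r = ∑ i, ‖c i‖ }

lemma gammaNorm_eq_sInf (k : ℕ) (X : Matrix (ι × κ) (ι × κ) ℂ) :
    gammaNorm k X = sInf (gammaCosts k X) :=
  rfl

lemma nonneg_of_mem_gammaCosts {X : Matrix (ι × κ) (ι × κ) ℂ} {r : ℝ} (hr : r ∈ gammaCosts k X) :
    0 ≤ r := by
  obtain ⟨N, c, v, w, -, -, rfl⟩ := hr
  exact sum_nonneg fun _ _ => norm_nonneg _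

lemma gammaNorm_nonneg (k : ℕ) (X : Matrix (ι × κ) (ι × κ) ℂ) : 0 ≤ gammaNorm k X :=
  Real.sInf_nonneg fun _ => nonneg_of_mem_gammaCosts

lemma SchmidtRankLE.exists_unit_smul_eq {x : ι × κ → ℂ} (hx : SchmidtRankLE k x) (hx0 : x ≠ 0) :
    ∃ z, vinner z z = 1 ∧ SchmidtRankLE k z ∧ (‖toLp 2 x‖ : ℂ) • z = x := by
  have hnorm : (‖toLp 2 x‖ : ℂ) ≠ 0 := by simpa
  refine ⟨(‖toLp 2 x‖ : ℂ)⁻¹ • x, ?_, hx.smul _, smul_inv_smul₀ hnorm x⟩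
  rw [vinner_self_eq_one_iff, WithLp.toLp_smul]
  exact norm_smul_inv_norm (𝕜 := ℂ) (by simpa using hx0)

variable {I : Type*} [Fintype I]

lemma sum_norm_mem_gammaCosts (c : I → ℂ) {v w : I → ι × κ → ℂ}
    (hvw : ∀ i, vinner (v i) (v i) = 1 ∧ vinner (w i) (w i) = 1 ∧
      SchmidtRankLE k (v i) ∧ SchmidtRankLE k (w i)) :
    ∑ i, ‖c i‖ ∈ gammaCosts k (∑ i, c i • ketBra (v i) (w i)) := by
  let e := (Fintype.equivFin I).symm
  exact ⟨Fintype.card I, c ∘ e, v ∘ e, w ∘ e, fun i => hvw (e i),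
    (e.sum_comp fun i => c i • ketBra (v i) (w i)).symm, (e.sum_comp fun i => ‖c i‖).symm⟩

lemma sum_norm_mul_norm_mem_gammaCosts {x y : I → ι × κ → ℂ} (hx : ∀ i, SchmidtRankLE k (x i))
    (hy : ∀ i, SchmidtRankLE k (y i)) :
    ∑ i, ‖toLp 2 (x i)‖ * ‖toLp 2 (y i)‖ ∈ gammaCosts k (∑ i, ketBra (x i) (y i)) := by
  classical
  -- Zero vectors cannot be normalized, so their terms are dropped first.
  let K := {i // x i ≠ 0 ∧ y i ≠ 0}
  have hzero (i : I) (hi : i ∉ Set.range (Subtype.val : K → I)) : x i = 0 ∨ y i = 0 := by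
    simpa [K, or_iff_not_imp_left] using hi
  choose v hv1 hv hvx using fun i : K => (hx i).exists_unit_smul_eq i.2.1
  choose w hw1 hw hwy using fun i : K => (hy i).exists_unit_smul_eq i.2.2
  have hmem := sum_norm_mem_gammaCosts
    (fun i : K => (‖toLp 2 (x i)‖ : ℂ) * star (‖toLp 2 (y i)‖ : ℂ))
    fun i => ⟨hv1 i, hw1 i, hv i, hw i⟩
  simp only [← ketBra_smul_smul, hvx, hwy] at hmem
  have hcost : ∑ i : K, ‖(‖toLp 2 (x i)‖ : ℂ) * star (‖toLp 2 (y i)‖ : ℂ)‖ =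
      ∑ i, ‖toLp 2 (x i)‖ * ‖toLp 2 (y i)‖ :=
    Fintype.sum_of_injective (Subtype.val : K → I) Subtype.val_injective _ _
      (fun i hi => by rcases hzero i hi with h | h <;> simp [h]) fun i => by simp
  have hsum : ∑ i : K, ketBra (x i) (y i) = ∑ i, ketBra (x i) (y i) :=
    Fintype.sum_of_injective (Subtype.val : K → I) Subtype.val_injective _ _
      (fun i hi => by rcases hzero i hi with h | h <;> simp [h, ketBra]) fun _ => rfl
  rwa [hcost, hsum] at hmem

lemma gammaCosts_nonempty (hk : 0 < k) (X : Matrix (ι × κ) (ι × κ) ℂ) :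
    (gammaCosts k X).Nonempty := by
  classical
  have hX : X =
      ∑ p : (ι × κ) × (ι × κ), ketBra (X p.1 p.2 • Pi.single p.1 1) (Pi.single p.2 1) := by
    rw [Fintype.sum_prod_type]
    conv_lhs => rw [matrix_eq_sum_single X]
    refine sum_congr rfl fun p _ => sum_congr rfl fun q _ => ?_
    ext
    simp [ketBra, single_apply, vecMulVec_apply, Pi.single_apply, ← ite_and, eq_comm, and_comm]
  rw [hX]
  exact ⟨_, sum_norm_mul_norm_mem_gammaCosts (fun p => (schmidtRankLE_single hk p.1).smul _)
    fun p => schmidtRankLE_single hk p.2⟩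

lemma gammaNorm_ketBra_le {F G : ℝ} {v w : ι × κ → ℂ} (hv : v ∈ convexHull ℝ (schmidtBall ι κ k F))
    (hw : w ∈ convexHull ℝ (schmidtBall ι κ k G)) : gammaNorm k (ketBra v w) ≤ F * G := by
  obtain ⟨I, _, p, x, hp0, hp1, hx, rfl⟩ := mem_convexHull_iff_exists_fintype.1 hv
  obtain ⟨I', _, q, y, hq0, hq1, hy, rfl⟩ := mem_convexHull_iff_exists_fintype.1 hw
  have hcost : ∑ z : I × I', ‖toLp 2 (p z.1 • x z.1)‖ * ‖toLp 2 (q z.2 • y z.2)‖ ∈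
      gammaCosts k (ketBra (∑ i, p i • x i) (∑ j, q j • y j)) := by
    rw [ketBra_sum_sum]
    exact sum_norm_mul_norm_mem_gammaCosts (fun z => (hx z.1).1.smul (p z.1 : ℂ))
      fun z => (hy z.2).1.smul (q z.2 : ℂ)
  have hterm (z : I × I') : ‖toLp 2 (p z.1 • x z.1)‖ * ‖toLp 2 (q z.2 • y z.2)‖ ≤
      p z.1 * q z.2 * (F * G) := by
    have hF : 0 ≤ F := (norm_nonneg _).trans (hx z.1).2
    rw [WithLp.toLp_smul, WithLp.toLp_smul, norm_smul_of_nonneg (hp0 _),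
      norm_smul_of_nonneg (hq0 _), mul_mul_mul_comm]
    exact mul_le_mul_of_nonneg_left (mul_le_mul (hx z.1).2 (hy z.2).2 (norm_nonneg _) hF)
      (mul_nonneg (hp0 _) (hq0 _))
  calc gammaNorm k (ketBra (∑ i, p i • x i) (∑ j, q j • y j))
      ≤ ∑ z : I × I', ‖toLp 2 (p z.1 • x z.1)‖ * ‖toLp 2 (q z.2 • y z.2)‖ :=
        csInf_le ⟨0, fun _ => nonneg_of_mem_gammaCosts⟩ hcost
    _ ≤ ∑ z : I × I', p z.1 * q z.2 * (F * G) := sum_le_sum fun z _ => hterm z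
    _ = F * G := by rw [← sum_mul, Fintype.sum_prod_type, ← sum_mul_sum, hp1, hq1]; ring

lemma norm_vinner_mulVec_le_of_mem_gammaCosts {X : Matrix (ι × κ) (ι × κ) ℂ} {r : ℝ}
    (hr : r ∈ gammaCosts k X) (x y : ι × κ → ℂ) :
    ‖vinner x (X *ᵥ y)‖ ≤ skVecNorm k x * skVecNorm k y * r := by
  obtain ⟨N, c, v, w, hvw, rfl, rfl⟩ := hr
  have hexpand : vinner x ((∑ i, c i • ketBra (v i) (w i)) *ᵥ y) =
      ∑ i, c i * (vinner x (v i) * vinner (w i) y) := by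
    rw [sum_mulVec, vinner_sum_right]
    refine sum_congr rfl fun i _ => ?_
    rw [← vinner_mulVec_ketBra, smul_mulVec, vinner, dotProduct_smul, smul_eq_mul, vinner]
  rw [hexpand, mul_sum]
  refine (norm_sum_le _ _).trans (sum_le_sum fun i _ => ?_)
  obtain ⟨hv1, hw1, hv, hw⟩ := hvw i
  rw [norm_mul, norm_mul, norm_vinner_comm x, mul_comm]
  gcongr
  · exact skVecNorm_nonneg k x
  · exact norm_vinner_le_skVecNorm hv1 hv x
  · exact norm_vinner_le_skVecNorm hw1 hw y

lemma norm_vinner_mulVec_le (hk : 0 < k) (X : Matrix (ι × κ) (ι × κ) ℂ) (x y : ι × κ → ℂ) :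
    ‖vinner x (X *ᵥ y)‖ ≤ skVecNorm k x * skVecNorm k y * gammaNorm k X := by
  have hnonneg := mul_nonneg (skVecNorm_nonneg k x) (skVecNorm_nonneg k y)
  rw [gammaNorm_eq_sInf, ← smul_eq_mul, ← Real.sInf_smul_of_nonneg hnonneg]
  refine le_csInf ((gammaCosts_nonempty hk X).image _) ?_
  rintro _ ⟨r, hr, rfl⟩
  exact norm_vinner_mulVec_le_of_mem_gammaCosts hr x y

lemma le_gammaNorm_ketBra (hk : 0 < k) {F G : ℝ} {v w x y : ι × κ → ℂ} (hF : skVecNorm k x ≤ F)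
    (hG : skVecNorm k y ≤ G) (hxv : vinner x v = (F ^ 2 : ℝ)) (hyw : vinner y w = (G ^ 2 : ℝ)) :
    F * G ≤ gammaNorm k (ketBra v w) := by
  have hF0 : 0 ≤ F := (skVecNorm_nonneg k x).trans hF
  have hG0 : 0 ≤ G := (skVecNorm_nonneg k y).trans hG
  rcases (mul_nonneg hF0 hG0).eq_or_lt with hFG | hFG
  · exact hFG ▸ gammaNorm_nonneg k _
  refine le_of_mul_le_mul_left ?_ hFG
  calc F * G * (F * G) = ‖vinner x (ketBra v w *ᵥ y)‖ := by
        rw [vinner_mulVec_ketBra, norm_mul, norm_vinner_comm w, hxv, hyw]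
        simp only [Complex.norm_real, norm_pow, Real.norm_of_nonneg hF0, Real.norm_of_nonneg hG0]
        ring
    _ ≤ skVecNorm k x * skVecNorm k y * gammaNorm k (ketBra v w) := norm_vinner_mulVec_le hk _ x y
    _ ≤ F * G * gammaNorm k (ketBra v w) := by
        gcongr
        exacts [gammaNorm_nonneg k _, skVecNorm_nonneg k y]

end GammaNorm

section Flattening

variable {I : Type*} {k : ℕ} {α : I → ℝ} {R J : Finset I} {c : ℝ}

/-- The paper's `(∑ i ∈ R, α i ^ 2 + (k - #R) * c ^ 2) ^ (1 / 2)`: the `ℓ²` norm of the `k` largest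
coefficients after those outside `R` have been replaced by `c`. -/
noncomputable def flattenedNorm (k : ℕ) (α : I → ℝ) (R : Finset I) (c : ℝ) : ℝ :=
  √(∑ i ∈ R, α i ^ 2 + ((k : ℝ) - #R) * c ^ 2)

variable [DecidableEq I]

lemma sqrt_sum_sq_eq_flattenedNorm (hRJ : R ⊆ J) (hJ : #J = k) :
    √(∑ i ∈ J, R.piecewise α (fun _ => c) i ^ 2) = flattenedNorm k α R c := by
  have hR : ∑ i ∈ R, R.piecewise α (fun _ => c) i ^ 2 = ∑ i ∈ R, α i ^ 2 :=
    sum_congr rfl fun i hi => by rw [piecewise_eq_of_mem _ _ _ hi]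
  have hdiff : ∑ i ∈ J \ R, R.piecewise α (fun _ => c) i ^ 2 = ((k : ℝ) - #R) * c ^ 2 := by
    rw [← hJ, ← Nat.cast_sub (card_le_card hRJ), ← card_sdiff_of_subset hRJ, ← nsmul_eq_mul,
      ← sum_const]
    exact sum_congr rfl fun i hi => by rw [piecewise_eq_of_notMem _ _ _ (mem_sdiff.1 hi).2]
  rw [flattenedNorm, ← sum_sdiff hRJ, hR, hdiff, add_comm]

variable [Fintype I]

/-- The level `c` separates the coefficients `α` in `R` from the others and equals the mass of `α`
outside `R` divided by `k - #R`. In the paper `R` is the set of the first `r` indices and `c` is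
`α̃`; the flattened coefficients are `R.piecewise α fun _ => c`. -/
structure IsFlattening (k : ℕ) (α : I → ℝ) (R : Finset I) (c : ℝ) : Prop where
  card_lt : #R < k
  le_card : k ≤ Fintype.card I
  nonneg : ∀ i, 0 ≤ α i
  level_le : ∀ i ∈ R, c ≤ α i
  le_level : ∀ i ∉ R, α i ≤ c
  sum_compl : ∑ i ∈ Rᶜ, α i = ((k : ℝ) - #R) * c

namespace IsFlattening

lemma level_nonneg (h : IsFlattening k α R c) : 0 ≤ c := by
  have hpos : (0 : ℝ) < k - #R := sub_pos.2 (Nat.cast_lt.2 h.card_lt)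
  refine nonneg_of_mul_nonneg_right ?_ hpos
  rw [← h.sum_compl]
  exact sum_nonneg fun i _ => h.nonneg i

lemma exists_superset_card_eq (h : IsFlattening k α R c) : ∃ J, R ⊆ J ∧ #J = k := by
  obtain ⟨J, hRJ, -, hJ⟩ := exists_subsuperset_card_eq (subset_univ R) h.card_lt.le h.le_card
  exact ⟨J, hRJ, hJ⟩

lemma isTopSet (h : IsFlattening k α R c) (hRJ : R ⊆ J) :
    IsTopSet (fun i => R.piecewise α (fun _ => c) i ^ 2) J := by
  refine ⟨c ^ 2, sq_nonneg c, fun i _ => ?_, fun i hi => ?_⟩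
  · by_cases hiR : i ∈ R
    · simpa [hiR] using pow_le_pow_left₀ h.level_nonneg (h.level_le i hiR) 2
    · simp [hiR]
  · have hiR : i ∉ R := fun hiR => hi (hRJ hiR)
    simp [hiR]

lemma flattenedNorm_sq (h : IsFlattening k α R c) :
    flattenedNorm k α R c ^ 2 = ∑ i, R.piecewise α (fun _ => c) i * α i := by
  have hpos : (0 : ℝ) < k - #R := sub_pos.2 (Nat.cast_lt.2 h.card_lt)
  have hR : ∑ i ∈ R, R.piecewise α (fun _ => c) i * α i = ∑ i ∈ R, α i ^ 2 :=
    sum_congr rfl fun i hi => by rw [piecewise_eq_of_mem _ _ _ hi, sq]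
  have hRc : ∑ i ∈ Rᶜ, R.piecewise α (fun _ => c) i * α i = ((k : ℝ) - #R) * c ^ 2 := by
    rw [sq, ← mul_assoc, ← h.sum_compl, mul_comm, mul_sum]
    exact sum_congr rfl fun i hi => by rw [piecewise_eq_of_notMem _ _ _ (mem_compl.1 hi)]
  rw [flattenedNorm, Real.sq_sqrt (by positivity), ← sum_add_sum_compl R, hR, hRc]

lemma exists_weights (h : IsFlattening k α R c) :
    ∃ t : I → ℝ, (∀ i, 0 ≤ t i) ∧ (∀ i, t i ≤ 1) ∧ ∑ i, t i = k ∧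
      R.piecewise α (fun _ => c) * t = α := by
  rcases h.level_nonneg.eq_or_lt with hc | hc
  · obtain ⟨J, hRJ, hJ⟩ := h.exists_superset_card_eq
    refine ⟨(J : Set I).indicator 1, Set.indicator_nonneg fun _ _ => zero_le_one,
      Set.indicator_le' (fun _ _ => le_rfl) fun _ _ => zero_le_one,
      by simp [Set.indicator_apply, hJ], ?_⟩
    funext i
    by_cases hi : i ∈ R
    · simp [hi, hRJ hi]
    · simp [hi, ← hc, ((h.le_level i hi).trans_eq hc.symm).antisymm (h.nonneg i)]
  · refine ⟨R.piecewise 1 fun i => α i / c, fun i => ?_, fun i => ?_, ?_, ?_⟩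
    · by_cases hi : i ∈ R
      · simp [hi]
      · simpa [hi] using div_nonneg (h.nonneg i) hc.le
    · by_cases hi : i ∈ R
      · simp [hi]
      · simpa [hi] using div_le_one_of_le₀ (h.le_level i hi) hc.le
    · simp [sum_piecewise, ← compl_eq_univ_sdiff, ← sum_div, h.sum_compl, hc.ne']
    · funext i
      by_cases hi : i ∈ R <;> simp [hi, mul_div_cancel₀, hc.ne']

variable {a : I → ι → ℂ} {b : I → κ → ℂ}

lemma schmidtMap_mem_convexHull (h : IsFlattening k α R c) (ha : Orthonormal' a)
    (hb : Orthonormal' b) :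
    schmidtMap a b α ∈ convexHull ℝ (schmidtBall ι κ k (flattenedNorm k α R c)) := by
  obtain ⟨J, hRJ, hJ⟩ := h.exists_superset_card_eq
  obtain ⟨t, ht0, ht1, ht, hα⟩ := h.exists_weights
  have hmem := schmidtMap_mul_mem_convexHull ha hb (h.isTopSet hRJ) ht0 ht1 (by rw [ht, hJ])
  rwa [hα, sqrt_sum_sq_eq_flattenedNorm hRJ hJ, hJ] at hmem

lemma skVecNorm_schmidtMap_le (h : IsFlattening k α R c) (ha : Orthonormal' a)
    (hb : Orthonormal' b) :
    skVecNorm k (schmidtMap a b (R.piecewise α fun _ => c)) ≤ flattenedNorm k α R c := by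
  obtain ⟨J, hRJ, hJ⟩ := h.exists_superset_card_eq
  rw [← sqrt_sum_sq_eq_flattenedNorm hRJ hJ, ← hJ]
  exact Ent.skVecNorm_schmidtMap_le ha hb (h.isTopSet hRJ)

lemma vinner_schmidtMap (h : IsFlattening k α R c) (ha : Orthonormal' a) (hb : Orthonormal' b) :
    vinner (schmidtMap a b (R.piecewise α fun _ => c)) (schmidtMap a b α) =
      (flattenedNorm k α R c ^ 2 : ℝ) := by
  rw [vinner_schmidtMap_of_orthonormal ha hb, h.flattenedNorm_sq]

end IsFlattening

theorem gammaNorm_ketBra_schmidtMap {I' : Type*} [Fintype I'] [DecidableEq I'] {β : I' → ℝ}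
    {S : Finset I'} {d : ℝ} {a : I → ι → ℂ} {b : I → κ → ℂ} {a' : I' → ι → ℂ} {b' : I' → κ → ℂ}
    (ha : Orthonormal' a) (hb : Orthonormal' b) (ha' : Orthonormal' a') (hb' : Orthonormal' b')
    (hα : IsFlattening k α R c) (hβ : IsFlattening k β S d) :
    gammaNorm k (ketBra (schmidtMap a b α) (schmidtMap a' b' β)) =
      flattenedNorm k α R c * flattenedNorm k β S d :=
  le_antisymm
    (gammaNorm_ketBra_le (hα.schmidtMap_mem_convexHull ha hb)
      (hβ.schmidtMap_mem_convexHull ha' hb'))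
    (le_gammaNorm_ketBra (Nat.zero_lt_of_lt hα.card_lt) (hα.skVecNorm_schmidtMap_le ha hb)
      (hβ.skVecNorm_schmidtMap_le ha' hb') (hα.vinner_schmidtMap ha hb)
      (hβ.vinner_schmidtMap ha' hb'))

end Flattening

section SchmidtDecomposition

variable {k p q r s : ℕ} {α β : ℕ → ℝ}

/-- `v = ∑ i < q, α i • (a i ⊗ b i)` is a Schmidt decomposition with coefficients in decreasing
order; nothing is required of the values of `α`, `a` and `b` at indices `q` and above. -/
structure IsSchmidtDecomposition (q : ℕ) (v : ι × κ → ℂ) (α : ℕ → ℝ) (a : ℕ → ι → ℂ)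
    (b : ℕ → κ → ℂ) : Prop where
  nonneg : ∀ i, i < q → 0 ≤ α i
  antitone : ∀ i j, i ≤ j → j < q → α j ≤ α i
  orthonormal_left : ∀ i j, i < q → j < q → vinner (a i) (a j) = if i = j then 1 else 0
  orthonormal_right : ∀ i j, i < q → j < q → vinner (b i) (b j) = if i = j then 1 else 0
  eq_sum : v = ∑ i ∈ range q, α i • prodVec (a i) (b i)

/-- `r` is the number of leading coefficients that flattening to `k` levels keeps: the largest
`r < k` whose last kept coefficient `α (r - 1)` (indices start at `0`) exceeds
`(∑ i ∈ [r, q), α i) / (k - r)`, and `0` if there is none. -/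
structure IsFlatteningIndex (k q : ℕ) (α : ℕ → ℝ) (r : ℕ) : Prop where
  lt : r < k
  tail_lt : 1 ≤ r → (∑ i ∈ Ico r q, α i) / ((k : ℝ) - r) < α (r - 1)
  maximal : ∀ j, r < j → j < k → ¬ (∑ i ∈ Ico j q, α i) / ((k : ℝ) - j) < α (j - 1)

lemma IsFlatteningIndex.le_tail (h : IsFlatteningIndex k q α r) (hkq : k ≤ q)
    (hα : ∀ i, i < q → 0 ≤ α i) : α r ≤ (∑ i ∈ Ico r q, α i) / ((k : ℝ) - r) := by
  have hrk := h.lt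
  have hpos : (0 : ℝ) < k - r := sub_pos.2 (Nat.cast_lt.2 hrk)
  have hsplit : ∑ i ∈ Ico r q, α i = α r + ∑ i ∈ Ico (r + 1) q, α i :=
    sum_eq_sum_Ico_succ_bot (hrk.trans_le hkq) α
  suffices (k - (r + 1)) * α r ≤ ∑ i ∈ Ico (r + 1) q, α i by
    rw [le_div_iff₀ hpos, hsplit]
    linarith
  rcases (Nat.succ_le_of_lt hrk).eq_or_lt with hk | hk
  · simpa [← hk] using sum_nonneg fun i hi => hα i (mem_Ico.1 hi).2
  · have hpos' : (0 : ℝ) < k - (r + 1 : ℕ) := sub_pos.2 (Nat.cast_lt.2 hk)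
    have hmax := not_lt.1 (h.maximal (r + 1) r.lt_succ_self hk)
    rw [le_div_iff₀ hpos'] at hmax
    simpa [mul_comm] using hmax

lemma sum_filter_val_lt {M : Type*} [AddCommMonoid M] (hrq : r ≤ q) (f : ℕ → M) :
    ∑ i : Fin q with i.val < r, f i = ∑ i ∈ range r, f i := by
  rw [sum_filter, Fin.sum_univ_eq_sum_range (fun i => if i < r then f i else 0), ← sum_filter]
  congr 1
  grind

lemma sum_compl_filter_val_lt {M : Type*} [AddCommMonoid M] (f : ℕ → M) :
    ∑ i ∈ ({i : Fin q | i.val < r} : Finset (Fin q))ᶜ, f i = ∑ i ∈ Ico r q, f i := by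
  rw [compl_filter, sum_filter, Fin.sum_univ_eq_sum_range (fun i => if ¬i < r then f i else 0),
    ← sum_filter]
  congr 1
  grind

lemma IsFlatteningIndex.isFlattening (h : IsFlatteningIndex k q α r) (hkq : k ≤ q)
    (hnonneg : ∀ i, i < q → 0 ≤ α i) (hanti : ∀ i j, i ≤ j → j < q → α j ≤ α i) :
    IsFlattening k (fun i : Fin q => α i) {i : Fin q | i.val < r}
      ((∑ i ∈ Ico r q, α i) / ((k : ℝ) - r)) := by
  have hrk := h.lt
  have hcard : #{i : Fin q | i.val < r} = r := by
    rw [Fin.card_filter_val_lt, min_eq_right (by lia)]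
  refine ⟨hcard.trans_lt hrk, by simpa, fun i => hnonneg i i.2, fun i hi => ?_, fun i hi => ?_, ?_⟩
  · have hir : i.val < r := (mem_filter.1 hi).2
    exact (h.tail_lt (by lia)).le.trans (hanti i (r - 1) (by lia) (by lia))
  · have hri : r ≤ i.val := by simpa using hi
    exact (hanti r i hri i.2).trans (h.le_tail hkq hnonneg)
  · rw [sum_compl_filter_val_lt α, hcard, mul_div_cancel₀ _ (sub_pos.2 (Nat.cast_lt.2 hrk)).ne']

lemma IsFlatteningIndex.flattenedNorm_eq (h : IsFlatteningIndex k q α r) (hkq : k ≤ q) (c : ℝ) :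
    flattenedNorm k (fun i : Fin q => α i) {i : Fin q | i.val < r} c =
      √(∑ i ∈ range r, α i ^ 2 + ((k : ℝ) - r) * c ^ 2) := by
  have hrq : r ≤ q := h.lt.le.trans hkq
  rw [flattenedNorm, sum_filter_val_lt hrq fun i => α i ^ 2, Fin.card_filter_val_lt,
    min_eq_right hrq]

variable {v w : ι × κ → ℂ} {a a' : ℕ → ι → ℂ} {b b' : ℕ → κ → ℂ}

namespace IsSchmidtDecomposition

lemma orthonormal_restrict_left (h : IsSchmidtDecomposition q v α a b) :
    Orthonormal' fun i : Fin q => a i := fun i j => by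
  simp [h.orthonormal_left i j i.2 j.2, Fin.ext_iff]

lemma orthonormal_restrict_right (h : IsSchmidtDecomposition q v α a b) :
    Orthonormal' fun i : Fin q => b i := fun i j => by
  simp [h.orthonormal_right i j i.2 j.2, Fin.ext_iff]

lemma eq_schmidtMap (h : IsSchmidtDecomposition q v α a b) :
    v = schmidtMap (fun i : Fin q => a i) (fun i : Fin q => b i) fun i => α i :=
  h.eq_sum.trans (Fin.sum_univ_eq_sum_range (fun i => α i • prodVec (a i) (b i)) q).symm

end IsSchmidtDecomposition

theorem gammaNorm_of_rankOne_general (hkp : k ≤ p) (hkq : k ≤ q)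
    (hv : IsSchmidtDecomposition p v α a b) (hw : IsSchmidtDecomposition q w β a' b')
    (hr : IsFlatteningIndex k p α r) (hs : IsFlatteningIndex k q β s) :
    gammaNorm k (ketBra v w) =
      √(∑ i ∈ range r, α i ^ 2 + ((k : ℝ) - r) * ((∑ i ∈ Ico r p, α i) / ((k : ℝ) - r)) ^ 2) *
      √(∑ i ∈ range s, β i ^ 2 + ((k : ℝ) - s) * ((∑ i ∈ Ico s q, β i) / ((k : ℝ) - s)) ^ 2) := by
  rw [hv.eq_schmidtMap, hw.eq_schmidtMap, ← hr.flattenedNorm_eq hkp, ← hs.flattenedNorm_eq hkq]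
  exact gammaNorm_ketBra_schmidtMap hv.orthonormal_restrict_left hv.orthonormal_restrict_right
    hw.orthonormal_restrict_left hw.orthonormal_restrict_right
    (hr.isFlattening hkp hv.nonneg hv.antitone) (hs.isFlattening hkq hw.nonneg hw.antitone)

end SchmidtDecomposition

/-- for unit vectors `v`, `w` with Schmidt coefficients `α` and `β`
respectively (presented via Schmidt decompositions; 0-based indexing), with `r, α̃` defined
from `α` and `s, β̃` defined analogously from `β` as in the paper,
`‖|v⟩⟨w|‖_{γ,k} = sqrt(Σ_{i=1}^r α_i² + (k-r)·α̃²) · sqrt(Σ_{i=1}^s β_i² + (k-s)·β̃²)`. -/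
theorem gammaNorm_of_rankOne {m n k : ℕ} (hk1 : 1 ≤ k) (hk : k ≤ min m n)
    (v w : Fin m × Fin n → ℂ) (hv : vinner v v = 1) (hw : vinner w w = 1)
    (α β : ℕ → ℝ) (a a' : ℕ → Fin m → ℂ) (b b' : ℕ → Fin n → ℂ)
    (hα0 : ∀ i, i < min m n → 0 ≤ α i)
    (hαmono : ∀ i j, i ≤ j → j < min m n → α j ≤ α i)
    (hβ0 : ∀ i, i < min m n → 0 ≤ β i)
    (hβmono : ∀ i j, i ≤ j → j < min m n → β j ≤ β i)
    (ha : ∀ i j, i < min m n → j < min m n → vinner (a i) (a j) = if i = j then 1 else 0)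
    (hb : ∀ i j, i < min m n → j < min m n → vinner (b i) (b j) = if i = j then 1 else 0)
    (ha' : ∀ i j, i < min m n → j < min m n → vinner (a' i) (a' j) = if i = j then 1 else 0)
    (hb' : ∀ i j, i < min m n → j < min m n → vinner (b' i) (b' j) = if i = j then 1 else 0)
    (hvdec : v = ∑ i ∈ Finset.range (min m n), α i • prodVec (a i) (b i))
    (hwdec : w = ∑ i ∈ Finset.range (min m n), β i • prodVec (a' i) (b' i))
    (r : ℕ) (hrk : r < k)
    (hr : 1 ≤ r → (∑ i ∈ Finset.Ico r (min m n), α i) / ((k : ℝ) - r) < α (r - 1))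
    (hrmax : ∀ j, r < j → j < k →
      ¬ ((∑ i ∈ Finset.Ico j (min m n), α i) / ((k : ℝ) - j) < α (j - 1)))
    (s : ℕ) (hsk : s < k)
    (hs : 1 ≤ s → (∑ i ∈ Finset.Ico s (min m n), β i) / ((k : ℝ) - s) < β (s - 1))
    (hsmax : ∀ j, s < j → j < k →
      ¬ ((∑ i ∈ Finset.Ico j (min m n), β i) / ((k : ℝ) - j) < β (j - 1))) :
    gammaNorm k (ketBra v w) =
      Real.sqrt ((∑ i ∈ Finset.range r, α i ^ 2) +
        ((k : ℝ) - r) * ((∑ i ∈ Finset.Ico r (min m n), α i) / ((k : ℝ) - r)) ^ 2) *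
      Real.sqrt ((∑ i ∈ Finset.range s, β i ^ 2) +
        ((k : ℝ) - s) * ((∑ i ∈ Finset.Ico s (min m n), β i) / ((k : ℝ) - s)) ^ 2) :=
  gammaNorm_of_rankOne_general hk hk ⟨hα0, hαmono, ha, hb, hvdec⟩ ⟨hβ0, hβmono, ha', hb', hwdec⟩
    ⟨hrk, hr, hrmax⟩ ⟨hsk, hs, hsmax⟩

end Ent
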